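/- Let K be a field, R a K-module, and let M_{1q} : R ⊗ R^{⊗q} → R (q ≥ 1) be a family of K-multilinear operations; extend the family by M_{00} = 0, M_{10} = M_{01} = id_R, M_{0q} = 0 for q ≥ 2, and M_{pq} = 0 for all p ≥ 2. Write {x; y₁,…,y_q} := M_{1q}(x; y₁⊗…⊗y_q) and {x; } := x. Then the extended family satisfies all the multibrace relations (R_{ijk}) for i,j,k ≥ 1 if and only if the brace relations hold: for all n, m ≥ 1 and x, y₁,…,y_n, z₁,…,z_m ∈ R, { {x; y₁,…,y_n}; z₁,…,z_m } = Σ {x; z₁,…,z_{p₁}, {y₁; z_{p₁+1},…,z_{q₁}}, z_{q₁+1},…,z_{p₂}, {y₂; z_{p₂+1},…,z_{q₂}}, …, {y_n; z_{p_n+1},…,z_{q_n}}, z_{q_n+1},…,z_m }, the sum running over all sequences of integers 0 ≤ p₁ ≤ q₁ ≤ p₂ ≤ q₂ ≤ … ≤ p_n ≤ q_n ≤ m. -/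

import Mathlib

open Finset

/-- The set of pairs of sequences `(i₁,…,i_k)`, `(j₁,…,j_k)` of nonnegative integers with
`i₁+⋯+i_k = p`, `j₁+⋯+j_k = q` and `i_t + j_t ≥ 1` for all `t`, encoded as functions
`Fin k → ℕ × ℕ`. -/
def Comps (k p q : ℕ) : Finset (Fin k → ℕ × ℕ) :=
  (Fintype.piFinset fun _ : Fin k => Finset.range (p + 1) ×ˢ Finset.range (q + 1)).filter
    fun c => (∑ t, (c t).1) = p ∧ (∑ t, (c t).2) = q ∧ ∀ t, 1 ≤ (c t).1 + (c t).2

/-- Offset of the `t`-th consecutive block in the first family of variables. -/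
def off1 {k : ℕ} (c : Fin k → ℕ × ℕ) (t : Fin k) : ℕ :=
  ∑ u ∈ Finset.univ.filter (fun u => u < t), (c u).1

/-- Offset of the `t`-th consecutive block in the second family of variables. -/
def off2 {k : ℕ} (c : Fin k → ℕ × ℕ) (t : Fin k) : ℕ :=
  ∑ u ∈ Finset.univ.filter (fun u => u < t), (c u).2

section Ops
variable {A : Type*} [AddCommGroup A]

/-- `M_{i_t j_t}(x^t; y^t)`: the operation `M` applied to the `t`-th consecutive blocks of
the sequences `x` and `y`, as prescribed by the composition `c`. -/
def blockVal (M : ∀ p q : ℕ, (Fin p → A) → (Fin q → A) → A)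
    {k : ℕ} (c : Fin k → ℕ × ℕ) (x y : ℕ → A) (t : Fin k) : A :=
  M (c t).1 (c t).2 (fun s => x (off1 c t + s.1)) (fun s => y (off2 c t + s.1))

/-- The multibrace relation `(R_{ijk})`. -/
def Rrel (M : ∀ p q : ℕ, (Fin p → A) → (Fin q → A) → A)
    (i j k : ℕ) (x y z : ℕ → A) : Prop :=
  ∑ l ∈ Finset.Icc 1 (i + j), ∑ c ∈ Comps l i j,
      M l k (fun t : Fin l => blockVal M c x y t) (fun s : Fin k => z s.1)
    = ∑ m ∈ Finset.Icc 1 (j + k), ∑ c ∈ Comps m j k,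
        M i m (fun s : Fin i => x s.1) (fun t : Fin m => blockVal M c y z t)

/-- `ω^≻`: `omegaIter s x n = ((x₀ ≻ x₁) ≻ ⋯) ≻ x_n`. -/
def omegaIter (s : A → A → A) (x : ℕ → A) : ℕ → A
  | 0 => x 0
  | n + 1 => s (omegaIter s x n) (x (n + 1))

end Ops

/-- Extension of a family of brace-type operations `M_{1q}` (`q ≥ 1`) to a full multibrace
family, by `M₀₀ = 0`, `M₁₀ = M₀₁ = id`, `M_{0q} = 0` for `q ≥ 2`, and `M_{pq} = 0` for
`p ≥ 2`. -/
def Mext {V : Type*} [Zero V] (M1 : ∀ q : ℕ, V → (Fin q → V) → V) :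
    ∀ p q : ℕ, (Fin p → V) → (Fin q → V) → V
  | 1, 0, x, _ => x 0
  | 0, 1, _, y => y 0
  | 1, q + 1, x, y => M1 (q + 1) (x 0) y
  | _, _, _, _ => 0

/-- The segment `z_{a+1}, …, z_b` (with `z` `0`-indexed: entries `z a, …, z (b-1)`). -/
def seg {V : Type*} (z : ℕ → V) (a b : ℕ) : List V :=
  (List.range (b - a)).map fun s => z (a + s)

/-- The interleaved argument list
`z₁,…,z_{p₁}, {y₁; z_{p₁+1},…,z_{q₁}}, z_{q₁+1},…,z_{p₂}, …, {y_n; …}, z_{q_n+1},…,z_m`,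
built from the data `(y_i, p_i, q_i)`. -/
def interleave {V : Type*} (M1 : ∀ q : ℕ, V → (Fin q → V) → V) (z : ℕ → V) (m : ℕ) :
    ℕ → List (V × ℕ × ℕ) → List V
  | prev, [] => seg z prev m
  | prev, (a, p, q) :: rest =>
      seg z prev p ++ (M1 (q - p) a (fun s => z (p + s.1)) :: interleave M1 z m q rest)

/-- Sequences `0 ≤ p₁ ≤ q₁ ≤ p₂ ≤ q₂ ≤ ⋯ ≤ p_n ≤ q_n ≤ m`, encoded as functions
`Fin n → ℕ × ℕ`. -/
def Chains (n m : ℕ) : Finset (Fin n → ℕ × ℕ) :=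
  (Fintype.piFinset fun _ : Fin n => Finset.range (m + 1) ×ˢ Finset.range (m + 1)).filter
    fun c => (∀ i, (c i).1 ≤ (c i).2) ∧ (∀ i j : Fin n, i < j → (c i).2 ≤ (c j).1) ∧
      ∀ i, (c i).2 ≤ m

/-!
Since `M_{lk} = 0` for `l ≥ 2`, the left side of `(R_{1jk})` collapses to `{{x; y}; z}`, and both
sides of `(R_{ijk})` vanish for `i ≥ 2`. On the right side of `(R_{1jk})` a summand can be nonzero
only if each block is a single `z` or a `{y_t; z, …, z}`, and such sequences of blocks are exactly
the argument lists of the brace relation. The two sums agree because they satisfy the same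
recursion, obtained by splitting off the first argument.
-/

section Compositions

theorem mem_Comps {k p q : ℕ} {c : Fin k → ℕ × ℕ} :
    c ∈ Comps k p q ↔
      (∑ t, (c t).1) = p ∧ (∑ t, (c t).2) = q ∧ ∀ t, 1 ≤ (c t).1 + (c t).2 := by
  simp only [Comps, mem_filter, Fintype.mem_piFinset, mem_product, mem_range,
    and_iff_right_iff_imp]
  rintro ⟨rfl, rfl, -⟩ t
  exact ⟨Nat.lt_succ_of_le (single_le_sum_of_canonicallyOrdered (f := fun t => (c t).1)
      (mem_univ t)),
    Nat.lt_succ_of_le (single_le_sum_of_canonicallyOrdered (f := fun t => (c t).2) (mem_univ t))⟩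

theorem cons_mem_Comps {k p q : ℕ} {a : ℕ × ℕ} {c : Fin k → ℕ × ℕ} :
    (Fin.cons a c : Fin (k + 1) → ℕ × ℕ) ∈ Comps (k + 1) p q ↔
      1 ≤ a.1 + a.2 ∧ a.1 + ∑ t, (c t).1 = p ∧ a.2 + ∑ t, (c t).2 = q ∧
        ∀ t, 1 ≤ (c t).1 + (c t).2 := by
  simp only [mem_Comps, Fin.sum_univ_succ, Fin.forall_fin_succ, Fin.cons_zero, Fin.cons_succ]
  tauto

theorem Comps_zero (p q : ℕ) : Comps 0 p q = if p = 0 ∧ q = 0 then univ else ∅ := by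
  ext c
  split_ifs with h
  · simp [mem_Comps, h, eq_iff_true_of_subsingleton]
  · simp only [mem_Comps, univ_eq_empty, sum_empty, notMem_empty, iff_false]
    omega

theorem Comps_one {p q : ℕ} (h : 1 ≤ p + q) : Comps 1 p q = {fun _ => (p, q)} := by
  ext c
  simp only [mem_Comps, mem_singleton, funext_iff, Fin.forall_fin_one, Fin.sum_univ_one,
    Prod.ext_iff]
  omega

theorem sum_Comps_succ {W : Type*} [AddCommMonoid W] (k p q : ℕ)
    (f : (Fin (k + 1) → ℕ × ℕ) → W) :
    ∑ c ∈ Comps (k + 1) p q, f c =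
      ∑ a ∈ antidiagonal p, ∑ b ∈ antidiagonal q,
        if 1 ≤ a.1 + b.1 then ∑ c ∈ Comps k a.2 b.2, f (Fin.cons (a.1, b.1) c) else 0 := by
  rw [← sum_product', ← sum_filter, sum_sigma']
  refine sum_bij'
    (fun c _ => ⟨(((c 0).1, ∑ t, (Fin.tail c t).1), ((c 0).2, ∑ t, (Fin.tail c t).2)), Fin.tail c⟩)
    (fun s _ => Fin.cons (s.1.1.1, s.1.2.1) s.2) ?_ ?_ ?_ ?_ ?_
  · intro c hc
    rw [← Fin.cons_self_tail c, cons_mem_Comps] at hc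
    obtain ⟨hpos, hp, hq, htail⟩ := hc
    simp [mem_Comps, hpos, hp, hq, htail]
  · rintro ⟨⟨a, b⟩, c⟩ h
    simp only [mem_sigma, mem_filter, mem_product, HasAntidiagonal.mem_antidiagonal, mem_Comps] at h
    obtain ⟨⟨⟨ha, hb⟩, hpos⟩, hp, hq, htail⟩ := h
    exact cons_mem_Comps.2 ⟨hpos, by rw [hp, ha], by rw [hq, hb], htail⟩
  · intro c _
    exact Fin.cons_self_tail c
  · rintro ⟨⟨a, b⟩, c⟩ h
    simp only [mem_sigma, mem_Comps] at h
    simp [h]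
  · intro c _
    exact congrArg f (Fin.cons_self_tail c).symm

theorem off1_zero {k : ℕ} (c : Fin (k + 1) → ℕ × ℕ) : off1 c 0 = 0 := by
  simp [off1]

theorem off2_zero {k : ℕ} (c : Fin (k + 1) → ℕ × ℕ) : off2 c 0 = 0 := by
  simp [off2]

theorem off1_succ {k : ℕ} (c : Fin (k + 1) → ℕ × ℕ) (t : Fin k) :
    off1 c t.succ = (c 0).1 + off1 (Fin.tail c) t := by
  simp [off1, sum_filter, Fin.sum_univ_succ, Fin.tail]

theorem off2_succ {k : ℕ} (c : Fin (k + 1) → ℕ × ℕ) (t : Fin k) :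
    off2 c t.succ = (c 0).2 + off2 (Fin.tail c) t := by
  simp [off2, sum_filter, Fin.sum_univ_succ, Fin.tail]

theorem ofFn_blockVal_cons {V : Type*} (M : ∀ p q : ℕ, (Fin p → V) → (Fin q → V) → V) {k : ℕ}
    (a : ℕ × ℕ) (c : Fin k → ℕ × ℕ) (x y : ℕ → V) :
    List.ofFn (blockVal M (Fin.cons a c : Fin (k + 1) → ℕ × ℕ) x y) =
      M a.1 a.2 (fun s => x s) (fun s => y s) ::
        List.ofFn (blockVal M c (fun s => x (a.1 + s)) (fun s => y (a.2 + s))) := by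
  rw [List.ofFn_succ]
  congr 2
  · simp only [blockVal, off1_zero, off2_zero, zero_add]
    rfl
  · funext t
    simp only [blockVal, off1_succ, off2_succ, add_assoc]
    rfl

end Compositions

section ChainDecomposition

variable {n m : ℕ}

/-- The sequence `p₁, q₁, …, p_n, q_n` with all entries increased by `a`. -/
def shiftChain (a : ℕ) (c : Fin n → ℕ × ℕ) : Fin n → ℕ × ℕ :=
  fun i => (a + (c i).1, a + (c i).2)

theorem mem_Chains {c : Fin n → ℕ × ℕ} :
    c ∈ Chains n m ↔
      (∀ i, (c i).1 ≤ (c i).2) ∧ (∀ i j : Fin n, i < j → (c i).2 ≤ (c j).1) ∧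
        ∀ i, (c i).2 ≤ m := by
  simp only [Chains, mem_filter, Fintype.mem_piFinset, mem_product, mem_range,
    and_iff_right_iff_imp]
  rintro ⟨hle, -, hm⟩ i
  have := hle i
  have := hm i
  omega

theorem cons_mem_Chains {p q : ℕ} {c : Fin n → ℕ × ℕ} :
    (Fin.cons (p, q) c : Fin (n + 1) → ℕ × ℕ) ∈ Chains (n + 1) m ↔
      p ≤ q ∧ q ≤ m ∧ c ∈ Chains n m ∧ ∀ i, q ≤ (c i).1 := by
  simp only [mem_Chains, Fin.forall_fin_succ, Fin.cons_zero, Fin.cons_succ, Fin.succ_pos,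
    Fin.not_lt_zero, Fin.succ_lt_succ_iff, false_imp_iff, true_imp_iff, true_and]
  tauto

theorem shiftChain_mem_Chains {a : ℕ} {c : Fin n → ℕ × ℕ} :
    shiftChain a c ∈ Chains n (a + m) ↔ c ∈ Chains n m := by
  simp [mem_Chains, shiftChain]

theorem shiftChain_sub {a : ℕ} {c : Fin n → ℕ × ℕ} (hc : c ∈ Chains n m)
    (ha : ∀ i, a ≤ (c i).1) : shiftChain a (fun i => ((c i).1 - a, (c i).2 - a)) = c := by
  funext i
  exact Prod.ext (Nat.add_sub_cancel' (ha i))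
    (Nat.add_sub_cancel' ((ha i).trans ((mem_Chains.1 hc).1 i)))

variable {W : Type*} [AddCommMonoid W]

theorem sum_Chains_filter_le (a m : ℕ) (f : (Fin n → ℕ × ℕ) → W) :
    ∑ c ∈ Chains n (a + m) with ∀ i, a ≤ (c i).1, f c = ∑ c ∈ Chains n m, f (shiftChain a c) := by
  symm
  refine sum_bij' (fun c _ => shiftChain a c) (fun c _ i => ((c i).1 - a, (c i).2 - a))
    ?_ ?_ ?_ ?_ ?_
  · intro c hc
    exact mem_filter.2 ⟨shiftChain_mem_Chains.2 hc, fun i => Nat.le_add_right _ _⟩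
  · intro c hc
    obtain ⟨hc, ha⟩ := mem_filter.1 hc
    rwa [← shiftChain_mem_Chains, shiftChain_sub hc ha]
  · intro c _
    simp [shiftChain]
  · intro c hc
    obtain ⟨hc, ha⟩ := mem_filter.1 hc
    exact shiftChain_sub hc ha
  · intro c _
    rfl

theorem sum_Chains_filter_head_eq_zero (n m : ℕ) (f : (Fin (n + 1) → ℕ × ℕ) → W) :
    ∑ c ∈ Chains (n + 1) m with (c 0).1 = 0, f c =
      ∑ b ∈ antidiagonal m, ∑ c ∈ Chains n b.2, f (Fin.cons (0, b.1) (shiftChain b.1 c)) := by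
  trans ∑ b ∈ antidiagonal m, ∑ c ∈ Chains n m with ∀ i, b.1 ≤ (c i).1, f (Fin.cons (0, b.1) c)
  · rw [sum_sigma']
    have cons_tail {c : Fin (n + 1) → ℕ × ℕ} (h : (c 0).1 = 0) :
        (Fin.cons (0, (c 0).2) (Fin.tail c) : Fin (n + 1) → ℕ × ℕ) = c := by
      simp only [← h, Prod.mk.eta, Fin.cons_self_tail]
    refine sum_bij' (fun c _ => ⟨((c 0).2, m - (c 0).2), Fin.tail c⟩)
      (fun s _ => Fin.cons (0, s.1.1) s.2) ?_ ?_ ?_ ?_ ?_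
    · intro c hc
      obtain ⟨hc, h0⟩ := mem_filter.1 hc
      rw [← cons_tail h0, cons_mem_Chains] at hc
      obtain ⟨-, hle, htail, hhead⟩ := hc
      simp [hle, htail, hhead]
    · rintro ⟨⟨b, m'⟩, c⟩ h
      simp only [mem_sigma, HasAntidiagonal.mem_antidiagonal, mem_filter] at h
      obtain ⟨rfl, htail, hhead⟩ := h
      exact mem_filter.2 ⟨cons_mem_Chains.2 ⟨b.zero_le, Nat.le_add_right _ _, htail, hhead⟩, rfl⟩
    · intro c hc
      exact cons_tail (mem_filter.1 hc).2
    · rintro ⟨⟨b, m'⟩, c⟩ h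
      simp only [mem_sigma, HasAntidiagonal.mem_antidiagonal] at h
      simp [← h.1]
    · intro c hc
      exact congrArg f (cons_tail (mem_filter.1 hc).2).symm
  · refine sum_congr rfl fun b hb => ?_
    rw [← HasAntidiagonal.mem_antidiagonal.1 hb, sum_Chains_filter_le]

theorem sum_Chains_filter_head_ne_zero (n m : ℕ) (f : (Fin (n + 1) → ℕ × ℕ) → W) :
    ∑ c ∈ Chains (n + 1) m with (c 0).1 ≠ 0, f c =
      if 1 ≤ m then ∑ c ∈ Chains (n + 1) (m - 1), f (shiftChain 1 c) else 0 := by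
  split_ifs with hm
  · rw [← sum_Chains_filter_le, Nat.add_sub_cancel' hm]
    refine sum_congr (filter_congr fun c hc => ?_) fun _ _ => rfl
    obtain ⟨hle, hlt, -⟩ := mem_Chains.1 hc
    rw [Fin.forall_fin_succ, ← Nat.one_le_iff_ne_zero, iff_self_and]
    exact fun h0 i => h0.trans ((hle 0).trans (hlt 0 i.succ i.succ_pos))
  · refine sum_eq_zero fun c hc => absurd (mem_filter.1 hc).2 ?_
    obtain ⟨hle, -, hm'⟩ := mem_Chains.1 (mem_filter.1 hc).1
    have := hle 0
    have := hm' 0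
    omega

theorem sum_Chains_zero (m : ℕ) (f : (Fin 0 → ℕ × ℕ) → W) :
    ∑ c ∈ Chains 0 m, f c = f Fin.elim0 := by
  have : Chains 0 m = {Fin.elim0} := by
    ext c
    simp [mem_Chains, eq_iff_true_of_subsingleton]
  rw [this, sum_singleton]

theorem sum_Chains_succ (n m : ℕ) (f : (Fin (n + 1) → ℕ × ℕ) → W) :
    ∑ c ∈ Chains (n + 1) m, f c =
      (if 1 ≤ m then ∑ c ∈ Chains (n + 1) (m - 1), f (shiftChain 1 c) else 0) +
        ∑ b ∈ antidiagonal m, ∑ c ∈ Chains n b.2, f (Fin.cons (0, b.1) (shiftChain b.1 c)) := by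
  rw [← sum_Chains_filter_head_ne_zero, ← sum_Chains_filter_head_eq_zero,
    sum_filter_not_add_sum_filter]

end ChainDecomposition

section ArgumentLists

variable {V : Type*} (M1 : ∀ q : ℕ, V → (Fin q → V) → V)

theorem seg_succ (z : ℕ → V) (b : ℕ) :
    seg z 0 (1 + b) = z 0 :: seg (fun s => z (1 + s)) 0 b := by
  simp [seg, add_comm 1 b, List.range_succ_eq_map, add_comm 1, Function.comp_def]

theorem seg_add (z : ℕ → V) (a b c : ℕ) :
    seg z (a + b) (a + c) = seg (fun s => z (a + s)) b c := by
  simp [seg, Nat.add_sub_add_left, add_assoc]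

theorem interleave_add (z : ℕ → V) (a m prev : ℕ) (L : List (V × ℕ × ℕ)) :
    interleave M1 z (a + m) (a + prev) (L.map fun t => (t.1, a + t.2.1, a + t.2.2)) =
      interleave M1 (fun s => z (a + s)) m prev L := by
  induction L generalizing prev with
  | nil => exact seg_add z a prev m
  | cons t L ih =>
    simp only [List.map_cons, interleave, ih, seg_add, add_assoc]
    rw [Nat.add_sub_add_left]

/-- The argument list
`z₁,…,z_{p₁}, {y₁; z_{p₁+1},…,z_{q₁}}, …, {y_n; z_{p_n+1},…,z_{q_n}}, z_{q_n+1},…,z_m`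
of the brace relation, for the sequence `c` of the pairs `(p_i, q_i)`. -/
def chainArgs (m : ℕ) (y z : ℕ → V) {n : ℕ} (c : Fin n → ℕ × ℕ) : List V :=
  interleave M1 z m 0 (List.ofFn fun i : Fin n => (y i.1, c i))

theorem interleave_shiftChain (m a : ℕ) (y z : ℕ → V) {n : ℕ} (c : Fin n → ℕ × ℕ) :
    interleave M1 z (a + m) a (List.ofFn fun i : Fin n => (y i.1, shiftChain a c i)) =
      chainArgs M1 m y (fun s => z (a + s)) c := by
  rw [chainArgs, ← interleave_add, List.map_ofFn]
  rfl

theorem chainArgs_cons_shiftChain (m b : ℕ) (y z : ℕ → V) {n : ℕ} (c : Fin n → ℕ × ℕ) :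
    chainArgs M1 (b + m) y z (Fin.cons (0, b) (shiftChain b c) : Fin (n + 1) → ℕ × ℕ) =
      M1 b (y 0) (fun s => z s) ::
        chainArgs M1 m (fun s => y (s + 1)) (fun s => z (b + s)) c := by
  rw [← interleave_shiftChain]
  simp only [chainArgs, List.ofFn_succ, Fin.cons_zero, Fin.cons_succ, interleave]
  simp [seg]

theorem chainArgs_shiftChain_one (m : ℕ) (y z : ℕ → V) {n : ℕ} (c : Fin n → ℕ × ℕ) :
    chainArgs M1 (1 + m) y z (shiftChain 1 c) =
      z 0 :: chainArgs M1 m y (fun s => z (1 + s)) c := by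
  rw [← interleave_shiftChain, chainArgs]
  cases n with
  | zero => simp only [List.ofFn_zero, interleave, seg_succ, ← seg_add, add_zero]
  | succ n =>
    rw [List.ofFn_succ]
    simp [interleave, shiftChain, seg_succ, ← seg_add]

theorem sum_chainArgs {W : Type*} [AddCommMonoid W] (n m : ℕ) (y z : ℕ → V) (F : List V → W) :
    ∑ c ∈ Chains n m, F (chainArgs M1 m y z c) =
      (if n = 0 ∧ m = 0 then F [] else 0) +
      ((if 1 ≤ m then
        ∑ c ∈ Chains n (m - 1), F (z 0 :: chainArgs M1 (m - 1) y (fun s => z (1 + s)) c)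
      else 0) +
      if 1 ≤ n then
        ∑ b ∈ antidiagonal m, ∑ c ∈ Chains (n - 1) b.2,
          F (M1 b.1 (y 0) (fun s => z s) ::
            chainArgs M1 b.2 (fun s => y (s + 1)) (fun s => z (b.1 + s)) c)
      else 0) := by
  cases n with
  | zero =>
    simp only [sum_Chains_zero]
    cases m with
    | zero => simp [chainArgs, interleave, seg]
    | succ m =>
      rw [← chainArgs_shiftChain_one, Nat.add_sub_cancel, add_comm 1 m]
      simp [chainArgs]
  | succ n =>
    rw [sum_Chains_succ, if_neg (not_and_of_not_left _ n.succ_ne_zero), zero_add,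
      if_pos (Nat.le_add_left 1 n)]
    congr 1
    · split_ifs with hm
      · simp only [← chainArgs_shiftChain_one, Nat.add_sub_cancel' hm]
      · rfl
    · refine sum_congr rfl fun b hb => ?_
      simp only [← HasAntidiagonal.mem_antidiagonal.1 hb, chainArgs_cons_shiftChain]
      rfl

end ArgumentLists

theorem sum_antidiagonal_eq_of_two_le {W : Type*} [AddCommMonoid W] (n : ℕ) (f : ℕ × ℕ → W)
    (hf : ∀ a, 2 ≤ a.1 → f a = 0) :
    ∑ a ∈ antidiagonal n, f a = f (0, n) + if 1 ≤ n then f (1, n - 1) else 0 := by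
  cases n with
  | zero => simp
  | succ n =>
    rw [Nat.sum_antidiagonal_succ, if_pos (Nat.le_add_left 1 n), Nat.add_sub_cancel]
    congr 1
    refine sum_eq_single_of_mem (0, n) (by simp) fun a ha hne => hf _ ?_
    have : a.1 ≠ 0 := fun h => hne (Prod.ext h (by simpa [h] using ha))
    simp only
    omega

section ExtendedFamily

variable {V : Type*} [Zero V] (M1 : ∀ q : ℕ, V → (Fin q → V) → V)

theorem Mext_one (hM10 : ∀ (a : V) (y : Fin 0 → V), M1 0 a y = a) (q : ℕ) (x : Fin 1 → V)
    (y : Fin q → V) : Mext M1 1 q x y = M1 q (x 0) y := by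
  cases q with
  | zero => exact (hM10 _ y).symm
  | succ q => rfl

theorem Mext_of_two_le {p : ℕ} (hp : 2 ≤ p) (q : ℕ) (x : Fin p → V) (y : Fin q → V) :
    Mext M1 p q x y = 0 := by
  obtain ⟨p, rfl⟩ := Nat.exists_eq_add_of_le' hp
  rfl

theorem Mext_zero_of_two_le {q : ℕ} (hq : 2 ≤ q) (x : Fin 0 → V) (y : Fin q → V) :
    Mext M1 0 q x y = 0 := by
  obtain ⟨q, rfl⟩ := Nat.exists_eq_add_of_le' hq
  rfl

variable {W : Type*} [AddCommMonoid W] {F : List V → W}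

theorem sum_Comps_succ_blockVal (hM10 : ∀ (a : V) (y : Fin 0 → V), M1 0 a y = a)
    (hF : ∀ L, (0 : V) ∈ L → F L = 0) (l n m : ℕ) (y z : ℕ → V) :
    ∑ c ∈ Comps (l + 1) n m, F (List.ofFn (blockVal (Mext M1) c y z)) =
      (if 1 ≤ m then
        ∑ c ∈ Comps l n (m - 1),
          F (z 0 :: List.ofFn (blockVal (Mext M1) c y (fun s => z (1 + s))))
      else 0) +
      if 1 ≤ n then
        ∑ b ∈ antidiagonal m, ∑ c ∈ Comps l (n - 1) b.2,
          F (M1 b.1 (y 0) (fun s => z s) ::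
            List.ofFn (blockVal (Mext M1) c (fun s => y (s + 1)) (fun s => z (b.1 + s))))
      else 0 := by
  have hF0 (L : List V) : F (0 :: L) = 0 := hF _ List.mem_cons_self
  simp only [sum_Comps_succ, ofFn_blockVal_cons]
  rw [sum_antidiagonal_eq_of_two_le]
  · congr 1
    · rw [sum_antidiagonal_eq_of_two_le]
      · simp [Mext]
      · intro b hb
        simp [Mext_zero_of_two_le M1 hb, hF0]
    · simp [Mext_one M1 hM10, add_comm 1]
  · intro a ha
    simp [Mext_of_two_le M1 ha, hF0]

theorem sum_Comps_blockVal_eq_sum_chainArgs (hM10 : ∀ (a : V) (y : Fin 0 → V), M1 0 a y = a)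
    (hF : ∀ L, (0 : V) ∈ L → F L = 0) {N n m : ℕ} (hN : n + m < N) (y z : ℕ → V) :
    ∑ l ∈ range N, ∑ c ∈ Comps l n m, F (List.ofFn (blockVal (Mext M1) c y z)) =
      ∑ c ∈ Chains n m, F (chainArgs M1 m y z c) := by
  induction N generalizing n m y z F with
  | zero => omega
  | succ N ih =>
    have hcons (v : V) (L : List V) (hL : (0 : V) ∈ L) : F (v :: L) = 0 :=
      hF _ (List.mem_cons_of_mem v hL)
    have hnil : ∑ c ∈ Comps 0 n m, F (List.ofFn (blockVal (Mext M1) c y z)) =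
        if n = 0 ∧ m = 0 then F [] else 0 := by
      rw [Comps_zero]
      split_ifs <;> simp
    rw [sum_range_succ', sum_chainArgs, hnil, add_comm]
    simp only [sum_Comps_succ_blockVal M1 hM10 hF, sum_add_distrib]
    congr 2
    · split_ifs with hm
      · exact ih (hcons _) (by omega) _ _
      · exact sum_const_zero
    · split_ifs with hn
      · rw [sum_comm]
        refine sum_congr rfl fun b hb => ih (hcons _) ?_ _ _
        have := HasAntidiagonal.mem_antidiagonal.1 hb
        omega
      · exact sum_const_zero

end ExtendedFamily

section ListArguments

variable {V : Type*} (M1 : ∀ q : ℕ, V → (Fin q → V) → V)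

/-- The brace `{x; v₁,…,v_l}` with its arguments given as a list. -/
def braceList (x : V) (L : List V) : V :=
  M1 L.length x fun t => L.get t

theorem braceList_ofFn {l : ℕ} (x : V) (v : Fin l → V) :
    braceList M1 x (List.ofFn v) = M1 l x v := by
  have of_length_eq (L : List V) (hL : L.length = l) :
      braceList M1 x L = M1 l x fun t => L.get (t.cast hL.symm) := by
    subst hL
    rfl
  rw [of_length_eq _ List.length_ofFn]
  simp

theorem braceList_eq_zero_of_mem [Zero V]
    (hM1 : ∀ (q : ℕ) (a : V) (y : Fin q → V) (i : Fin q), y i = 0 → M1 q a y = 0) (x : V)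
    {L : List V} (hL : 0 ∈ L) : braceList M1 x L = 0 := by
  obtain ⟨i, hi⟩ := List.get_of_mem hL
  exact hM1 _ _ _ i hi

end ListArguments

section Relations

variable {V : Type*} [AddCommGroup V] (M1 : ∀ q : ℕ, V → (Fin q → V) → V)

/-- The brace relation expressing `{{x; y₁,…,y_n}; z₁,…,z_m}` as a sum of single braces. -/
def BraceRel (n m : ℕ) (x : V) (y z : ℕ → V) : Prop :=
  M1 m (M1 n x fun i => y i) (fun j => z j) =
    ∑ c ∈ Chains n m, braceList M1 x (chainArgs M1 m y z c)

theorem sum_Mext_blockVal (hM10 : ∀ (a : V) (y : Fin 0 → V), M1 0 a y = a) {i j : ℕ}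
    (hij : 1 ≤ i + j) (k : ℕ) (x y z : ℕ → V) :
    ∑ l ∈ Icc 1 (i + j), ∑ c ∈ Comps l i j,
        Mext M1 l k (fun t => blockVal (Mext M1) c x y t) (fun s => z s) =
      M1 k (Mext M1 i j (fun s => x s) (fun s => y s)) (fun s => z s) := by
  rw [sum_eq_single_of_mem 1 (left_mem_Icc.2 hij)]
  · simp [Comps_one hij, Mext_one M1 hM10, blockVal, off1_zero, off2_zero]
  · intro l hl hne
    have hl2 : 2 ≤ l := lt_of_le_of_ne (mem_Icc.1 hl).1 hne.symm
    exact sum_eq_zero fun c _ => Mext_of_two_le M1 hl2 ..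

theorem sum_blockVal_eq_sum_braceList (hM10 : ∀ (a : V) (y : Fin 0 → V), M1 0 a y = a)
    (hM1 : ∀ (q : ℕ) (a : V) (y : Fin q → V) (i : Fin q), y i = 0 → M1 q a y = 0) {n m : ℕ}
    (hnm : 1 ≤ n + m) (x : V) (y z : ℕ → V) :
    ∑ l ∈ Icc 1 (n + m), ∑ c ∈ Comps l n m, M1 l x (fun t => blockVal (Mext M1) c y z t) =
      ∑ c ∈ Chains n m, braceList M1 x (chainArgs M1 m y z c) := by
  rw [← sum_Comps_blockVal_eq_sum_chainArgs M1 hM10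
      (fun _ => braceList_eq_zero_of_mem M1 hM1 x) (Nat.lt_succ_self _),
    range_eq_Ico, sum_eq_sum_Ico_succ_bot (Nat.succ_pos _), Comps_zero, if_neg (by omega),
    sum_empty, zero_add]
  simp only [braceList_ofFn]
  rfl

theorem Rrel_Mext_one_iff_BraceRel (hM10 : ∀ (a : V) (y : Fin 0 → V), M1 0 a y = a)
    (hM1 : ∀ (q : ℕ) (a : V) (y : Fin q → V) (i : Fin q), y i = 0 → M1 q a y = 0) {j k : ℕ}
    (hjk : 1 ≤ j + k) (x y z : ℕ → V) :
    Rrel (Mext M1) 1 j k x y z ↔ BraceRel M1 j k (x 0) y z := by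
  rw [Rrel, BraceRel, sum_Mext_blockVal M1 hM10 (by omega),
    ← sum_blockVal_eq_sum_braceList M1 hM10 hM1 hjk]
  simp only [Mext_one M1 hM10]
  rfl

theorem Rrel_Mext_of_two_le (hM10 : ∀ (a : V) (y : Fin 0 → V), M1 0 a y = a)
    (hM1 : ∀ (q : ℕ) (y : Fin q → V), M1 q 0 y = 0) {i : ℕ} (hi : 2 ≤ i) (j k : ℕ)
    (x y z : ℕ → V) : Rrel (Mext M1) i j k x y z := by
  rw [Rrel, sum_Mext_blockVal M1 hM10 (by omega), Mext_of_two_le M1 hi, hM1]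
  exact (sum_eq_zero fun _ _ => sum_eq_zero fun _ _ => Mext_of_two_le M1 hi ..).symm

theorem multibrace_vanishing_iff_brace_general
    (hM10 : ∀ (a : V) (y : Fin 0 → V), M1 0 a y = a)
    (hM1_left : ∀ (q : ℕ) (y : Fin q → V), M1 q 0 y = 0)
    (hM1_right : ∀ (q : ℕ) (a : V) (y : Fin q → V) (i : Fin q), y i = 0 → M1 q a y = 0) :
    (∀ i j k : ℕ, 1 ≤ i → 1 ≤ j → 1 ≤ k → ∀ x y z : ℕ → V, Rrel (Mext M1) i j k x y z) ↔
      ∀ n m : ℕ, 1 ≤ n → 1 ≤ m → ∀ (x : V) (y z : ℕ → V), BraceRel M1 n m x y z := by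
  have hone {j : ℕ} (k : ℕ) (hj : 1 ≤ j) (x y z : ℕ → V) :=
    Rrel_Mext_one_iff_BraceRel M1 hM10 hM1_right (Nat.le_add_right_of_le (k := k) hj) x y z
  constructor
  · intro h n m hn hm x y z
    exact (hone m hn (fun _ => x) y z).1 (h 1 n m le_rfl hn hm _ y z)
  · intro h i j k hi hj hk x y z
    obtain rfl | hi2 := hi.eq_or_lt
    · exact (hone k hj x y z).2 (h j k hj hk (x 0) y z)
    · exact Rrel_Mext_of_two_le M1 hM10 hM1_left hi2 j k x y z

end Relations

/-- A family of multilinear operations `M_{1q}` (`q ≥ 1`), extended by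
`M₀₀ = 0`, `M₁₀ = M₀₁ = id`, `M_{0q} = 0` (`q ≥ 2`) and `M_{pq} = 0` (`p ≥ 2`), satisfies
all the multibrace relations `(R_{ijk})` if and only if it satisfies the brace relations:
a multibrace algebra with `M_{pq} = 0` for `p ≥ 2` is the same thing as a brace algebra. -/
theorem multibrace_vanishing_iff_brace (K V : Type*) [Field K] [AddCommGroup V] [Module K V]
    (M1 : ∀ q : ℕ, V → (Fin q → V) → V)
    (hM10 : ∀ (a : V) (y : Fin 0 → V), M1 0 a y = a)
    (h_add1 : ∀ (q : ℕ) (a a' : V) (y : Fin q → V),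
      M1 q (a + a') y = M1 q a y + M1 q a' y)
    (h_smul1 : ∀ (q : ℕ) (r : K) (a : V) (y : Fin q → V),
      M1 q (r • a) y = r • M1 q a y)
    (h_add2 : ∀ (q : ℕ) (a : V) (y : Fin q → V) (i : Fin q) (v w : V),
      M1 q a (Function.update y i (v + w))
        = M1 q a (Function.update y i v) + M1 q a (Function.update y i w))
    (h_smul2 : ∀ (q : ℕ) (a : V) (y : Fin q → V) (i : Fin q) (r : K) (v : V),
      M1 q a (Function.update y i (r • v)) = r • M1 q a (Function.update y i v)) :
    (∀ i j k : ℕ, 1 ≤ i → 1 ≤ j → 1 ≤ k → ∀ x y z : ℕ → V, Rrel (Mext M1) i j k x y z)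
    ↔
    (∀ n m : ℕ, 1 ≤ n → 1 ≤ m → ∀ (x : V) (y z : ℕ → V),
      M1 m (M1 n x (fun i : Fin n => y i.1)) (fun j : Fin m => z j.1)
        = ∑ c ∈ Chains n m,
            M1 (interleave M1 z m 0 (List.ofFn fun i : Fin n => (y i.1, c i))).length x
              (fun t =>
                (interleave M1 z m 0 (List.ofFn fun i : Fin n => (y i.1, c i))).get t)) :=
  multibrace_vanishing_iff_brace_general M1 hM10 (fun q y => by simpa using h_smul1 q 0 0 y)
    fun q a y i hi => by simpa [← hi] using h_smul2 q a y i 0 0
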